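/- arXiv:0705.0225 — 5 statements merged into one kernel-verified Lean document; each statement's English description precedes it below -/
import Mathlib

section
/- Let B be a Baire topological space and X a compact metric space, and let 𝒦(X) denote the set of nonempty compact subsets of X endowed with the Hausdorff metric. Let h : B → 𝒦(X) be upper semicontinuous, meaning: for every b ∈ B and every ε > 0 there is a neighborhood U of b such that for all b' ∈ U the set h(b') is contained in the open ε-thickening {x ∈ X : dist(x, h(b)) < ε} of h(b). Then the set of points of B at which h is continuous (with respect to the Hausdorff metric on 𝒦(X)) is a residual subset of B. -/
open Topology Metric

/-- **Semicontinuity (Proposition p=semi).** Let `B` be a Baire topological space and `X` a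
compact metric space, and let `𝒦(X)` be the space of nonempty compact subsets of `X` with the
Hausdorff metric. If `h : B → 𝒦(X)` is upper semicontinuous — for every `b` and `ε > 0` there
is a neighborhood `U` of `b` such that for every `b' ∈ U`, `h b'` is contained in the open
`ε`-thickening of `h b` — then the set of continuity points of `h` is residual in `B`. -/
theorem continuity_points_residual_of_upper_semicontinuous
    {B : Type*} [TopologicalSpace B] [BaireSpace B]
    {X : Type*} [MetricSpace X] [CompactSpace X]
    (h : B → TopologicalSpace.NonemptyCompacts X)
    (husc : ∀ b : B, ∀ ε : ℝ, 0 < ε → ∃ U ∈ 𝓝 b, ∀ b' ∈ U,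
      ∀ x ∈ (h b' : Set X), Metric.infDist x (h b : Set X) < ε) :
    {b : B | ContinuousAt h b} ∈ residual B := by
  -- the set of parameters whose value meets a fixed closed set is closed
  have hclosed : ∀ C : Set X, IsClosed C → IsClosed {b : B | ((h b : Set X) ∩ C).Nonempty} := by
    intro C hC
    rw [← isOpen_compl_iff, isOpen_iff_mem_nhds]
    intro b hb
    have hsub : (h b : Set X) ⊆ Cᶜ := fun x hx hxC => hb ⟨x, hx, hxC⟩
    obtain ⟨δ, hδ, hth⟩ := (h b).isCompact.exists_thickening_subset_open hC.isOpen_compl hsub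
    obtain ⟨U, hU, hUb⟩ := husc b δ hδ
    filter_upwards [hU] with b' hb'
    rintro ⟨x, hx, hxC⟩
    obtain ⟨y, hy, hxy⟩ := (Metric.infDist_lt_iff (h b).nonempty).1 (hUb b' hb' x hx)
    exact hth (Metric.mem_thickening_iff.2 ⟨y, hy, hxy⟩) hxC
  obtain ⟨D, hDc, hDd⟩ := TopologicalSpace.exists_countable_dense X
  have hres : ∀ x ∈ D, ∀ n : ℕ, ∀ᶠ b in residual B,
      b ∉ frontier {b : B | ((h b : Set X) ∩ closedBall x (1 / ((n : ℝ) + 1))).Nonempty} := by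
    intro x _ n
    have hc := hclosed (closedBall x (1 / ((n : ℝ) + 1))) isClosed_closedBall
    exact residual_of_dense_open isClosed_frontier.isOpen_compl
      (interior_eq_empty_iff_dense_compl.1 (interior_frontier hc))
  have hall : ∀ᶠ b in residual B, ∀ x ∈ D, ∀ n : ℕ,
      b ∉ frontier {b : B | ((h b : Set X) ∩ closedBall x (1 / ((n : ℝ) + 1))).Nonempty} :=
    (eventually_countable_ball hDc).2 fun x hx => eventually_countable_forall.2 (hres x hx)
  filter_upwards [hall] with b hb
  change ContinuousAt h b
  rw [Metric.continuousAt_iff']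
  intro ε hε
  obtain ⟨n, hn⟩ := exists_nat_one_div_lt (show 0 < ε / 4 by positivity)
  have hr : (0 : ℝ) < 1 / ((n : ℝ) + 1) := by positivity
  -- finitely many balls around points of `D` cover `h b`
  obtain ⟨t, ht⟩ := (h b).isCompact.elim_finite_subcover
    (fun x : D => ball (x : X) (1 / ((n : ℝ) + 1))) (fun _ => isOpen_ball) (by
      intro y _
      obtain ⟨x, hx, hxy⟩ := hDd.exists_dist_lt y hr
      exact Set.mem_iUnion.2 ⟨⟨x, hx⟩, hxy⟩)
  have hlow : ∀ x ∈ t, ∀ᶠ b' in 𝓝 b,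
      ((h b : Set X) ∩ closedBall (x : X) (1 / ((n : ℝ) + 1))).Nonempty →
      ((h b' : Set X) ∩ closedBall (x : X) (1 / ((n : ℝ) + 1))).Nonempty := by
    intro x _
    by_cases hm : ((h b : Set X) ∩ closedBall (x : X) (1 / ((n : ℝ) + 1))).Nonempty
    · have hint : b ∈ interior
          {b : B | ((h b : Set X) ∩ closedBall (x : X) (1 / ((n : ℝ) + 1))).Nonempty} := by
        by_contra hni
        exact hb x x.2 n ⟨subset_closure hm, hni⟩
      filter_upwards [mem_interior_iff_mem_nhds.1 hint] with b' hb' _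
      exact hb'
    · exact Filter.Eventually.of_forall fun _ hm' => absurd hm' hm
  obtain ⟨U, hU, hUb⟩ := husc b (ε / 2) (by positivity)
  filter_upwards [hU, (Filter.eventually_all_finset t).2 hlow] with b' hb' hlb
  rw [NonemptyCompacts.dist_eq]
  refine lt_of_le_of_lt (hausdorffDist_le_of_infDist (r := ε / 2) (by positivity)
    (fun x hx => (hUb b' hb' x hx).le) ?_) (by linarith)
  intro y hy
  obtain ⟨x, hxt, hyx⟩ := Set.mem_iUnion₂.1 (ht hy)
  obtain ⟨z, hz, hzx⟩ := hlb x hxt ⟨y, hy, ball_subset_closedBall hyx⟩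
  have h1 : dist y x < 1 / ((n : ℝ) + 1) := hyx
  have h2 : dist z x ≤ 1 / ((n : ℝ) + 1) := hzx
  have h3 := dist_triangle_right y z (x : X)
  exact (infDist_le_dist_of_mem hz).trans (by linarith)
end

section
/- Let M be a topological space, f : M → M a homeomorphism, and U ⊆ M an open set whose iterates f^n(U), n ∈ ℤ, are pairwise disjoint. Let g : M → M be a continuous map, let x ∈ U and a ∈ ℤ satisfy g(x) = f^a(x). Then there exists a neighborhood V of x such that for every y ∈ V ∩ U and every b ∈ ℤ, the equality g(y) = f^b(y) implies b = a. -/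
open Topology

/-- The `n`-th iterate (`n ∈ ℤ`) of a homeomorphism `f`, negative `n` denoting iterates
of `f⁻¹`, obtained as the `n`-th power of the underlying permutation. -/
def zIter {M : Type*} [TopologicalSpace M] (f : M ≃ₜ M) (n : ℤ) : M → M :=
  ⇑(f.toEquiv ^ n : Equiv.Perm M)

theorem zIter_isOpen_image {M : Type*} [TopologicalSpace M] (f : M ≃ₜ M) (U : Set M)
    (hU : IsOpen U) (n : ℤ) : IsOpen (zIter f n '' U) := by
  have key : IsOpenMap (zIter f n) := by
    unfold zIter
    induction n using Int.induction_on with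
    | zero => simpa using (IsOpenMap.id : IsOpenMap (id : M → M))
    | succ i ih =>
      rw [zpow_add_one, Equiv.Perm.coe_mul]
      exact ih.comp f.isOpenMap
    | pred i ih =>
      rw [zpow_sub_one, Equiv.Perm.coe_mul]
      exact ih.comp f.symm.isOpenMap
  exact key U hU

/-- Let `f` be a homeomorphism of a topological space `M` and `U` an open set whose iterates
`f^n(U)`, `n ∈ ℤ`, are pairwise disjoint. If `g` is continuous, `x ∈ U` and `g x = f^a x`,
then on some neighborhood `V` of `x`, for every `y ∈ V ∩ U`, the only integer `b` with
`g y = f^b y` is `b = a`. -/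
theorem locally_constant_power
    {M : Type*} [TopologicalSpace M] (f : M ≃ₜ M) (U : Set M) (hU : IsOpen U)
    (hdisj : ∀ j k : ℤ, j ≠ k → zIter f j '' U ∩ zIter f k '' U = ∅)
    (g : M → M) (hg : Continuous g) (x : M) (hx : x ∈ U) (a : ℤ)
    (hax : g x = zIter f a x) :
    ∃ V ∈ 𝓝 x, ∀ y ∈ V ∩ U, ∀ b : ℤ, g y = zIter f b y → b = a := by
  refine ⟨g ⁻¹' (zIter f a '' U), ?_, ?_⟩
  · exact ((zIter_isOpen_image f U hU a).preimage hg).mem_nhds ⟨x, hx, hax.symm⟩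
  · rintro y ⟨hyV, hyU⟩ b hb
    by_contra hne
    have h : g y ∈ zIter f b '' U ∩ zIter f a '' U := ⟨⟨y, hyU, hb.symm⟩, hyV⟩
    rw [hdisj b a hne] at h
    exact h
end

section
/- Let M be a nonempty connected Hausdorff topological space, let f, g : M → M be homeomorphisms, and let N ≥ 1 be an integer. Let P = {x ∈ M : f^p(x) = x for some integer p with 1 ≤ p ≤ 2N} be the set of periodic points of f of period at most 2N. Assume that M \ P is dense in M and connected in the subspace topology, and that for every x ∈ M \ P there exists an integer i with |i| ≤ N and g(x) = f^i(x). Then there exists an integer i with |i| ≤ N such that g = f^i on all of M. -/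
theorem continuous_zIter {M : Type*} [TopologicalSpace M] (f : M ≃ₜ M) (n : ℤ) :
    Continuous (zIter f n) := by
  unfold zIter
  cases n with
  | ofNat k =>
    have : ⇑(f.toEquiv ^ (Int.ofNat k) : Equiv.Perm M) = (⇑f)^[k] := by
      rw [Int.ofNat_eq_natCast, zpow_natCast, Equiv.Perm.coe_pow]; rfl
    rw [this]
    exact f.continuous.iterate k
  | negSucc k =>
    have : ⇑(f.toEquiv ^ (Int.negSucc k) : Equiv.Perm M) = (⇑f.symm)^[k + 1] := by
      rw [zpow_negSucc, ← inv_pow, Equiv.Perm.coe_pow]; rfl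
    rw [this]
    exact f.symm.continuous.iterate (k + 1)

theorem zIter_lt {M : Type*} [TopologicalSpace M] (f : M ≃ₜ M) (N : ℕ) (i j : ℤ)
    (hi : |i| ≤ (N : ℤ)) (hj : |j| ≤ (N : ℤ)) (hij : i < j) (x : M)
    (h : zIter f i x = zIter f j x) : ∃ p : ℕ, 1 ≤ p ∧ p ≤ 2 * N ∧ (⇑f)^[p] x = x := by
  rw [abs_le] at hi hj
  obtain ⟨p, hp⟩ := Int.eq_ofNat_of_zero_le (show 0 ≤ j - i by omega)
  refine ⟨p, by omega, by omega, ?_⟩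
  have hj' : j = i + (p : ℤ) := by omega
  unfold zIter at h
  rw [hj', zpow_add, Equiv.Perm.mul_apply] at h
  have h2 := (f.toEquiv ^ i : Equiv.Perm M).injective h
  rw [zpow_natCast, Equiv.Perm.coe_pow] at h2
  exact h2.symm

/-- Let `M` be a nonempty connected Hausdorff space, `f, g` homeomorphisms of `M`, `N ≥ 1`,
and `P` the set of periodic points of `f` of period at most `2N`. If `M \ P` is dense and
connected, and every `x ∈ M \ P` satisfies `g x = f^i x` for some integer `|i| ≤ N`, then
there is a single integer `i` with `|i| ≤ N` such that `g = f^i` on all of `M`. -/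
theorem global_power_from_local_powers
    {M : Type*} [TopologicalSpace M] [Nonempty M] [ConnectedSpace M] [T2Space M]
    (f g : M ≃ₜ M) (N : ℕ) (hN : 1 ≤ N)
    (P : Set M) (hP : P = {x : M | ∃ p : ℕ, 1 ≤ p ∧ p ≤ 2 * N ∧ (⇑f)^[p] x = x})
    (hdense : Dense Pᶜ) (hconn : IsConnected Pᶜ)
    (hloc : ∀ x ∈ Pᶜ, ∃ i : ℤ, |i| ≤ (N : ℤ) ∧ g x = zIter f i x) :
    ∃ i : ℤ, |i| ≤ (N : ℤ) ∧ ∀ x : M, g x = zIter f i x := by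
  obtain ⟨x₀, hx₀⟩ := hconn.nonempty
  obtain ⟨i, hi, hgi⟩ := hloc x₀ hx₀
  refine ⟨i, hi, ?_⟩
  have hA : ∀ j : ℤ, IsClosed {x | g x = zIter f j x} := fun j =>
    isClosed_eq g.continuous (continuous_zIter f j)
  have hfin : ({j : ℤ | |j| ≤ (N : ℤ) ∧ j ≠ i}).Finite := by
    refine (Set.finite_Icc (-(N : ℤ)) N).subset ?_
    rintro j ⟨hj, -⟩
    exact abs_le.mp hj
  have hB : IsClosed (⋃ j ∈ {j : ℤ | |j| ≤ (N : ℤ) ∧ j ≠ i}, {x | g x = zIter f j x}) :=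
    hfin.isClosed_biUnion fun j _ => hA j
  have hsub : Pᶜ ⊆ {x | g x = zIter f i x} := by
    intro y hy
    by_contra hyi
    obtain ⟨j, hj, hgj⟩ := hloc y hy
    have hji : j ≠ i := by
      rintro rfl
      exact hyi hgj
    obtain ⟨z, hz, hz1, hz2⟩ := isPreconnected_closed_iff.mp hconn.isPreconnected _ _ (hA i) hB
      (by
        intro w hw
        obtain ⟨k, hk, hgk⟩ := hloc w hw
        by_cases hki : k = i
        · left
          subst hki
          exact hgk
        · right
          exact Set.mem_biUnion (show k ∈ {j : ℤ | |j| ≤ (N : ℤ) ∧ j ≠ i} from ⟨hk, hki⟩) hgk)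
      ⟨x₀, hx₀, hgi⟩
      ⟨y, hy, Set.mem_biUnion (show j ∈ {j : ℤ | |j| ≤ (N : ℤ) ∧ j ≠ i} from ⟨hj, hji⟩) hgj⟩
    obtain ⟨k, ⟨hk, hki⟩, hgk⟩ := Set.mem_iUnion₂.mp hz2
    apply hz
    rw [hP]
    have e : zIter f i z = zIter f k z := hz1.symm.trans hgk
    rcases lt_or_gt_of_ne hki with h | h
    · exact zIter_lt f N k i hk hi h z e.symm
    · exact zIter_lt f N i k hi hk h z e
  intro x
  exact (hA i).closure_subset_iff.mpr hsub (hdense x)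
end

section
/- Let G be a group and f ∈ G an element of infinite order (f^n ≠ 1 for every nonzero integer n) whose centralizer in G equals the cyclic subgroup ⟨f⟩ = {f^n : n ∈ ℤ}. Then every nilpotent subgroup H of G containing f is equal to ⟨f⟩. -/
/-- If `f` is an element of infinite order in a group `G` whose centralizer equals the cyclic
subgroup `⟨f⟩` of all integer powers of `f`, then every nilpotent subgroup of `G` containing
`f` equals `⟨f⟩`. -/
theorem nilpotent_subgroup_eq_zpowers_of_centralizer_eq
    {G : Type*} [Group G] (f : G)
    (hord : ∀ n : ℤ, n ≠ 0 → f ^ n ≠ 1)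
    (hcent : Subgroup.centralizer {f} = Subgroup.zpowers f)
    (H : Subgroup G) (hH : Group.IsNilpotent H) (hfH : f ∈ H) :
    H = Subgroup.zpowers f := by
  have hf1 : f ≠ 1 := by simpa using hord 1 one_ne_zero
  have hcomm : ∀ x : G, x * f = f * x → x ∈ Subgroup.zpowers f := by
    intro x hx
    rw [← hcent, Subgroup.mem_centralizer_singleton_iff]
    exact hx
  have : Nontrivial H := ⟨⟨⟨f, hfH⟩, 1, fun h => hf1 (congrArg Subtype.val h)⟩⟩
  have hz : ∃ z : H, z ∈ Subgroup.center H ∧ z ≠ 1 := by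
    by_contra! hno
    have hb : ∀ n, Subgroup.upperCentralSeries H n = ⊥ := by
      intro n
      induction n with
      | zero => rfl
      | succ n ih =>
        rw [eq_bot_iff]
        intro x hx
        rw [Subgroup.mem_upperCentralSeries_succ_iff] at hx
        refine Subgroup.mem_bot.2 (hno x (Subgroup.mem_center_iff.2 fun y => ?_))
        have h := hx y
        rw [ih, Subgroup.mem_bot, commutatorElement_def, mul_inv_eq_one, mul_inv_eq_iff_eq_mul] at h
        exact h.symm
    obtain ⟨n, hn⟩ := Group.IsNilpotent.nilpotent H
    rw [hb n] at hn
    exact bot_ne_top hn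
  obtain ⟨z, hzc, hz1⟩ := hz
  rw [Subgroup.mem_center_iff] at hzc
  obtain ⟨k, hk⟩ := hcomm z (congrArg Subtype.val (hzc ⟨f, hfH⟩)).symm
  change f ^ k = z at hk
  have hk0 : k ≠ 0 := by
    rintro rfl
    exact hz1 (Subtype.ext (by simpa using hk.symm))
  have key : ∀ n, ∀ x : H, x ∈ Subgroup.upperCentralSeries H n → (x : G) ∈ Subgroup.zpowers f := by
    intro n
    induction n with
    | zero =>
      intro x hx
      rw [Subgroup.upperCentralSeries_zero, Subgroup.mem_bot] at hx
      subst hx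
      exact one_mem _
    | succ n ih =>
      intro x hx
      rw [Subgroup.mem_upperCentralSeries_succ_iff] at hx
      have h := ih _ (hx ⟨f, hfH⟩)
      rw [commutatorElement_def] at h
      have h2 : (x : G) * f * (x : G)⁻¹ ∈ Subgroup.zpowers f := by
        have := mul_mem h (Subgroup.mem_zpowers f)
        simpa using this
      obtain ⟨m, hm⟩ := h2
      change f ^ m = _ at hm
      have hxz : (x : G) * f ^ k * (x : G)⁻¹ = f ^ k := by
        rw [hk, mul_inv_eq_iff_eq_mul]
        exact congrArg Subtype.val (hzc x)
      rw [← conj_zpow, ← hm, ← zpow_mul] at hxz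
      have h3 : f ^ (m * k - k) = 1 := by rw [zpow_sub, hxz, mul_inv_cancel]
      have h4 : m * k - k = 0 := by
        by_contra hne
        exact hord _ hne h3
      have h5 : m = 1 := by
        have : (m - 1) * k = 0 := by linarith
        rcases mul_eq_zero.1 this with h | h
        · linarith
        · exact absurd h hk0
      subst h5
      apply hcomm
      rw [zpow_one] at hm
      exact (eq_mul_inv_iff_mul_eq.1 hm).symm
  obtain ⟨n, hn⟩ := Group.IsNilpotent.nilpotent H
  apply le_antisymm
  · intro x hx
    exact key n ⟨x, hx⟩ (by rw [hn]; trivial)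
  · rwa [Subgroup.zpowers_le]
end

section
/- Let E be a finite-dimensional real inner product space of dimension d. Let f, g : E → E be C¹ diffeomorphisms (bijections such that both the map and its inverse are continuously differentiable) satisfying f ∘ g = g ∘ f, and let K ≥ 1 be such that both g and g⁻¹ are Lipschitz with constant K. Then for every x ∈ E and every n ≥ 0, |log |det D(f^n)(x)| − log |det D(f^n)(g(x))|| ≤ 2 d log K, where f^n denotes the n-fold iterate of f and det D(f^n)(x) denotes the determinant of the Fréchet derivative of f^n at x. -/
open scoped NNReal

theorem aux_det_le {E : Type*} [NormedAddCommGroup E] [InnerProductSpace ℝ E]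
    [FiniteDimensional ℝ E] (A : E →L[ℝ] E) (K : ℝ) (hK : 0 ≤ K) (hA : ‖A‖ ≤ K) :
    |A.det| ≤ K ^ Module.finrank ℝ E := by
  borelize E
  let μ : MeasureTheory.Measure E := MeasureTheory.volume
  have h1 := MeasureTheory.Measure.addHaar_image_continuousLinearMap μ A
    (Metric.closedBall 0 1)
  have hsub : A '' (Metric.closedBall 0 1) ⊆ Metric.closedBall 0 K := by
    rintro _ ⟨v, hv, rfl⟩
    rw [mem_closedBall_zero_iff] at hv ⊢
    calc ‖A v‖ ≤ ‖A‖ * ‖v‖ := A.le_opNorm v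
      _ ≤ K * 1 := by gcongr
      _ = K := mul_one K
  have h2 := MeasureTheory.measure_mono (μ := μ) hsub
  rw [h1, MeasureTheory.Measure.addHaar_closedBall' μ 0 hK] at h2
  have hpos : μ (Metric.closedBall 0 1) ≠ 0 :=
    (Metric.measure_closedBall_pos μ 0 one_pos).ne'
  have hfin : μ (Metric.closedBall 0 1) ≠ ⊤ := MeasureTheory.measure_closedBall_lt_top.ne
  have h3 := (ENNReal.mul_le_mul_iff_left hpos hfin).1 h2
  exact (ENNReal.ofReal_le_ofReal_iff (by positivity)).1 h3

theorem aux_det_mul {E : Type*} [NormedAddCommGroup E] [InnerProductSpace ℝ E]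
    [FiniteDimensional ℝ E] (u v : E → E) (hu : Differentiable ℝ u) (hv : Differentiable ℝ v)
    (x : E) : (fderiv ℝ (u ∘ v) x).det = (fderiv ℝ u (v x)).det * (fderiv ℝ v x).det := by
  rw [fderiv_comp x (hu _) (hv _)]
  simp [ContinuousLinearMap.det]

theorem aux_det_inv {E : Type*} [NormedAddCommGroup E] [InnerProductSpace ℝ E]
    [FiniteDimensional ℝ E] (u v : E → E) (hu : Differentiable ℝ u) (hv : Differentiable ℝ v)
    (h : Function.LeftInverse v u) (x : E) :
    (fderiv ℝ v (u x)).det * (fderiv ℝ u x).det = 1 := by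
  rw [← aux_det_mul v u hv hu, h.comp_eq_id, fderiv_id]
  simp [ContinuousLinearMap.det]

theorem aux_log {E : Type*} [NormedAddCommGroup E] [InnerProductSpace ℝ E]
    [FiniteDimensional ℝ E] (g ginv : E → E) (hg : Differentiable ℝ g)
    (hginv : Differentiable ℝ ginv) (h : Function.LeftInverse ginv g)
    (K : ℝ≥0) (hK : 1 ≤ K) (hgl : LipschitzWith K g) (hginvl : LipschitzWith K ginv) (x : E) :
    abs (Real.log (abs (fderiv ℝ g x).det)) ≤ Module.finrank ℝ E * Real.log K := by
  have h1 := aux_det_inv g ginv hg hginv h x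
  have hb := aux_det_le _ K K.2 (norm_fderiv_le_of_lipschitz ℝ hgl (x₀ := x))
  have hc := aux_det_le _ K K.2 (norm_fderiv_le_of_lipschitz ℝ hginvl (x₀ := g x))
  have n1 := left_ne_zero_of_mul_eq_one h1
  have n2 := right_ne_zero_of_mul_eq_one h1
  have h2 : Real.log |(fderiv ℝ ginv (g x)).det| + Real.log |(fderiv ℝ g x).det| = 0 := by
    rw [← Real.log_mul (abs_ne_zero.2 n1) (abs_ne_zero.2 n2), ← abs_mul, h1]; simp
  have hb' := Real.log_le_log (abs_pos.2 n2) hb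
  have hc' := Real.log_le_log (abs_pos.2 n1) hc
  rw [Real.log_pow] at hb' hc'
  rw [abs_le]
  constructor <;> linarith

/-- **Bounded distortion along a commuting bi-Lipschitz map.** Let `E` be a `d`-dimensional
real inner product space and let `f, g` be commuting `C¹` diffeomorphisms of `E`, with `g`
and `g⁻¹` Lipschitz of constant `K ≥ 1`. Then for every `x` and `n ≥ 0`,
`|log |det D(fⁿ)(x)| − log |det D(fⁿ)(g x)|| ≤ 2 d log K`. -/
theorem distortion_bound_of_commuting_lipschitz
    {E : Type*} [NormedAddCommGroup E] [InnerProductSpace ℝ E] [FiniteDimensional ℝ E]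
    (d : ℕ) (hd : Module.finrank ℝ E = d)
    (f finv g ginv : E → E)
    (hf : ContDiff ℝ 1 f) (hfinv : ContDiff ℝ 1 finv)
    (hfli : Function.LeftInverse finv f) (hfri : Function.RightInverse finv f)
    (hg : ContDiff ℝ 1 g) (hginv : ContDiff ℝ 1 ginv)
    (hgli : Function.LeftInverse ginv g) (hgri : Function.RightInverse ginv g)
    (hcomm : f ∘ g = g ∘ f)
    (K : ℝ≥0) (hK : 1 ≤ K)
    (hgl : LipschitzWith K g) (hginvl : LipschitzWith K ginv) :
    ∀ x : E, ∀ n : ℕ,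
      abs (Real.log (abs ((fderiv ℝ (f^[n]) x).det)) -
           Real.log (abs ((fderiv ℝ (f^[n]) (g x)).det))) ≤
        2 * d * Real.log K := by
  intro x n
  have dg := hg.differentiable one_ne_zero
  have dgi := hginv.differentiable one_ne_zero
  have dfn := (hf.differentiable one_ne_zero).iterate n
  have dfin := (hfinv.differentiable one_ne_zero).iterate n
  have hc : (f^[n]) ∘ g = g ∘ (f^[n]) :=
    funext (Function.Commute.iterate_left (f := f) (g := g) (fun y => congrFun hcomm y) n)
  have e1 := aux_det_mul (f^[n]) g dfn dg x
  rw [hc, aux_det_mul g (f^[n]) dg dfn x] at e1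
  have nf : ∀ y, (fderiv ℝ (f^[n]) y).det ≠ 0 := fun y =>
    right_ne_zero_of_mul_eq_one (aux_det_inv (f^[n]) (finv^[n]) dfn dfin (hfli.iterate n) y)
  have ng : ∀ y, (fderiv ℝ g y).det ≠ 0 := fun y =>
    right_ne_zero_of_mul_eq_one (aux_det_inv g ginv dg dgi hgli y)
  have e2 := congrArg (fun t => Real.log |t|) e1
  simp only [abs_mul] at e2
  rw [Real.log_mul (abs_ne_zero.2 (ng _)) (abs_ne_zero.2 (nf _)),
    Real.log_mul (abs_ne_zero.2 (nf _)) (abs_ne_zero.2 (ng _))] at e2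
  have b1 := abs_le.1 (aux_log g ginv dg dgi hgli K hK hgl hginvl x)
  have b2 := abs_le.1 (aux_log g ginv dg dgi hgli K hK hgl hginvl (f^[n] x))
  rw [hd] at b1 b2
  rw [abs_le]
  constructor <;> linarith [b1.1, b1.2, b2.1, b2.2]
end
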